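/- Let D be a connected vf-safe delta-matroid with a connected 3-minor D'. If e ∈ E(D) − E(D'), then at least one of D∖e, D/e and D+e/e is connected and has D' as a 3-minor. -/

import Mathlib

/-! A set system on `E` is identified with its indicator tensor: a function from the subsets of `E`
to `ZMod 2`, i.e. an element of the tensor power of `(ZMod 2)²` indexed by `E`.  Deletion,
contraction and twist-contraction at `e` are the three nonzero functionals on the coordinate `e`,
whose sum is zero, and twists and loop complementations are the changes of basis permuting them.
Since the conventions at loops and coloops only replace a vanishing functional by another one,
`D'` is a 3-minor of `D` exactly when it is a nonzero image of `D` under a product functional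
(`cov_of_minor`, `minor_of_cov`); in particular any element of `E(D) - E(D')` may be removed
first.  Being disconnected means being a tensor product along a proper bipartition.

Let `D'` be a 3-minor of the minor of type `a` at `e`, and suppose this minor is a product
`g ⊗ h` along a bipartition `X`, `Y` (otherwise it is the one wanted).  Let `f'` be the minor of
any other type.

* The exchange axiom, in every basis, gives `VS.array`: in the `3 × 3` array of minors at two
  elements, if one entry vanishes then the nonzero entries in its row and column coincide.  It
  follows that a product functional on `Y` killing `h` maps `f'` to `0` or `g`
  (`apps_eq_zero_or`).
* The product functionals killing `h` span the annihilator of `h` (`eq_ten_of_forall`), so if all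
  of them killed `f'`, then `f'` would be `p ⊗ h` and `D` would be disconnected.  Hence some
  product functional on `Y` maps `f'` to `g`, and likewise on `X` to `h` (`exists_functional`).
  As the connected `D'` lies on one side, it is a 3-minor of `f'`.
* If `f' = p ⊗ q` along `Z`, `W`, then its minors `g` and `h` split along `Z` and `W` too, so
  `g ⊗ h = u ⊗ v` along the same bipartition.  Applying the previous step to `Z`, `W` gives a
  functional mapping `p ⊗ q` to `u`, so `p = u`; the common factor makes `D` disconnected
  (`not_disc_of_disc`).  Hence `f'` is connected.
-/

noncomputable section
open scoped Classical symmDiff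

/-- A set system: a finite ground set `E` together with a collection `Fs` of subsets of
`E`, the feasible sets. -/
structure SetSystem (α : Type*) where
  E : Finset α
  Fs : Set (Finset α)

namespace SetSystem

variable {α : Type*} [DecidableEq α]

/-- A delta-matroid: a set system whose nonempty collection of feasible sets (subsets of
the ground set) satisfies the symmetric exchange axiom. -/
def IsDeltaMatroid (D : SetSystem α) : Prop :=
  D.Fs.Nonempty ∧ (∀ F ∈ D.Fs, F ⊆ D.E) ∧
    ∀ F₁ ∈ D.Fs, ∀ F₂ ∈ D.Fs, ∀ x ∈ F₁ ∆ F₂, ∃ y ∈ F₁ ∆ F₂, F₁ ∆ ({x, y} : Finset α) ∈ D.Fs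

/-- A delta-matroid is even if all its feasible sets have the same parity of size. -/
def IsEven (D : SetSystem α) : Prop :=
  ∀ F₁ ∈ D.Fs, ∀ F₂ ∈ D.Fs, F₁.card % 2 = F₂.card % 2

/-- `e` is a coloop: it belongs to every feasible set. -/
def IsColoop (D : SetSystem α) (e : α) : Prop := ∀ F ∈ D.Fs, e ∈ F

/-- `e` is a loop: it belongs to no feasible set. -/
def IsLoop (D : SetSystem α) (e : α) : Prop := ∀ F ∈ D.Fs, e ∉ F

/-- The underlying deletion operation: keep the feasible sets avoiding `e`. -/
def del₀ (D : SetSystem α) (e : α) : SetSystem α :=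
  ⟨D.E.erase e, {F | F ∈ D.Fs ∧ e ∉ F}⟩

/-- The underlying contraction operation: remove `e` from the feasible sets containing it. -/
def con₀ (D : SetSystem α) (e : α) : SetSystem α :=
  ⟨D.E.erase e, {F | ∃ G ∈ D.Fs, e ∈ G ∧ F = G.erase e}⟩

/-- Deletion `D∖e`: `del₀` if `e` is not a coloop, and `con₀` (= `D/e`) if `e` is a coloop. -/
def delete (D : SetSystem α) (e : α) : SetSystem α :=
  if D.IsColoop e then D.con₀ e else D.del₀ e

/-- Contraction `D/e`: `con₀` if `e` is not a loop, and `del₀` (= `D∖e`) if `e` is a loop. -/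
def contract (D : SetSystem α) (e : α) : SetSystem α :=
  if D.IsLoop e then D.del₀ e else D.con₀ e

/-- The twist `D*A`: replace each feasible set `F` by `F ∆ A`. -/
def twist (D : SetSystem α) (A : Finset α) : SetSystem α :=
  ⟨D.E, {F | ∃ G ∈ D.Fs, F = G ∆ A}⟩

/-- Loop complementation `D+e`. -/
def lcomp (D : SetSystem α) (e : α) : SetSystem α :=
  ⟨D.E, D.Fs ∆ {F | ∃ G ∈ D.Fs, e ∉ G ∧ F = G ∪ {e}}⟩

/-- Loop complementation `D+A` by a set `A = {a₁, …, aₙ}`, defined as the iterated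
single-element loop complementation `D+a₁+⋯+aₙ` (the result is order-independent). -/
def lcompSet (D : SetSystem α) (A : Finset α) : SetSystem α :=
  A.toList.foldl lcomp D

/-- The operation `D ∗̄ A = D+A*A+A`. -/
def starBar (D : SetSystem α) (A : Finset α) : SetSystem α :=
  ((D.lcompSet A).twist A).lcompSet A

/-- The direct sum of two set systems. -/
def directSum (D₁ D₂ : SetSystem α) : SetSystem α :=
  ⟨D₁.E ∪ D₂.E, {F | ∃ F₁ ∈ D₁.Fs, ∃ F₂ ∈ D₂.Fs, F = F₁ ∪ F₂}⟩

/-- `X` is a separator of `D`: `D = D₁ ⊕ D₂` for set systems `D₁`, `D₂` with ground sets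
`X` and `E − X`. -/
def IsSeparator (D : SetSystem α) (X : Finset α) : Prop :=
  X ⊆ D.E ∧ ∃ D₁ D₂ : SetSystem α, D₁.E = X ∧ D₂.E = D.E \ X ∧
    (∀ F ∈ D₁.Fs, F ⊆ D₁.E) ∧ (∀ F ∈ D₂.Fs, F ⊆ D₂.E) ∧ D = D₁.directSum D₂

/-- `D` is connected: it has no proper separator. -/
def Connected (D : SetSystem α) : Prop :=
  ¬ ∃ X, D.IsSeparator X ∧ X.Nonempty ∧ X ≠ D.E

/-- `D'` is a minor of `D`: it is obtained from `D` by a sequence of single-element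
deletions and contractions. -/
inductive MinorOf : SetSystem α → SetSystem α → Prop
  | refl (D : SetSystem α) : MinorOf D D
  | del {D' D : SetSystem α} (e : α) : MinorOf D' D → e ∈ D'.E → MinorOf (D'.delete e) D
  | con {D' D : SetSystem α} (e : α) : MinorOf D' D → e ∈ D'.E → MinorOf (D'.contract e) D

/-- `D'` is a 3-minor of `D`: it is obtained from `D` by a sequence of single-element
deletions, contractions and twist-contractions `D ↦ (D+e)/e`. -/
inductive Minor3Of : SetSystem α → SetSystem α → Prop
  | refl (D : SetSystem α) : Minor3Of D D
  | del {D' D : SetSystem α} (e : α) : Minor3Of D' D → e ∈ D'.E → Minor3Of (D'.delete e) D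
  | con {D' D : SetSystem α} (e : α) : Minor3Of D' D → e ∈ D'.E → Minor3Of (D'.contract e) D
  | tcon {D' D : SetSystem α} (e : α) : Minor3Of D' D → e ∈ D'.E →
      Minor3Of ((D'.lcomp e).contract e) D

/-- `D` is vf-safe: every set system obtained from `D` by a sequence of twists by single
elements and loop complementations is a delta-matroid. -/
inductive TwistLcompReach : SetSystem α → SetSystem α → Prop
  | refl (D : SetSystem α) : TwistLcompReach D D
  | twist {D' D : SetSystem α} (e : α) : TwistLcompReach D' D → e ∈ D'.E →
      TwistLcompReach (D'.twist {e}) D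
  | lcomp {D' D : SetSystem α} (e : α) : TwistLcompReach D' D → e ∈ D'.E →
      TwistLcompReach (D'.lcomp e) D

/-- A vf-safe delta-matroid. -/
def IsVfSafe (D : SetSystem α) : Prop :=
  ∀ D' : SetSystem α, TwistLcompReach D' D → D'.IsDeltaMatroid

end SetSystem

namespace SplitterVf
open SetSystem

variable {α : Type*} [DecidableEq α]

/-! ### Tensors and elementary functionals -/

/-- The three elementary removals: deletion, contraction and twist-contraction. -/
inductive Op
  | del
  | con
  | tcon

/-- The functional of type `c` applied to the coordinate `e` of the tensor `f`.  The value is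
again a function on all finite sets, vanishing on those containing `e`. -/
def app (c : Op) (e : α) (f : Finset α → ZMod 2) : Finset α → ZMod 2 := fun F =>
  if e ∈ F then 0 else
    match c with
    | .del => f F
    | .con => f (insert e F)
    | .tcon => f F + f (insert e F)

/-- The functionals of a list, applied from the head on. -/
def apps : List (Op × α) → (Finset α → ZMod 2) → (Finset α → ZMod 2)
  | [], f => f
  | p :: l, f => apps l (app p.1 p.2 f)

/-- `l` contains exactly one functional for each element of `Y`, and nothing else: it is a
product functional on `Y`. -/
inductive Cov : List (Op × α) → Finset α → Prop
  | nil : Cov [] ∅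
  | cons {l : List (Op × α)} {Y : Finset α} (c : Op) (y : α) :
      y ∉ Y → Cov l Y → Cov ((c, y) :: l) (insert y Y)

/-- `f` is supported on subsets of `X`, i.e. it is a tensor with index set `X`. -/
def Supp (X : Finset α) (f : Finset α → ZMod 2) : Prop := ∀ F, ¬ F ⊆ X → f F = 0

/-- The tensor product of `g`, living on `X`, and `h`, living on a set disjoint from `X`. -/
def ten (X : Finset α) (g h : Finset α → ZMod 2) : Finset α → ZMod 2 :=
  fun F => g (F ∩ X) * h (F \ X)

/-- `f`, viewed as a tensor with index set `E`, is a product along a proper bipartition of `E`.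
The factors are not required to be supported on the two sides; see `Disc.exists_supp`. -/
def Disc (E : Finset α) (f : Finset α → ZMod 2) : Prop :=
  ∃ (X : Finset α) (g h : Finset α → ZMod 2),
    (∃ x ∈ E, x ∈ X) ∧ (∃ x ∈ E, x ∉ X) ∧ f = ten X g h

lemma zmod2_cases (a : ZMod 2) : a = 0 ∨ a = 1 := by
  revert a; decide

lemma zmod2_self (a : ZMod 2) : a + a = 0 := CharTwo.add_self_eq_zero a

@[simp] lemma app_zero (c : Op) (e : α) : app c e (0 : Finset α → ZMod 2) = 0 := by
  ext F; cases c <;> simp [app]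

@[simp] lemma apps_zero (l : List (Op × α)) : apps l (0 : Finset α → ZMod 2) = 0 := by
  induction l with
  | nil => rfl
  | cons p l ih => simp [apps, ih]

lemma apps_append (l l' : List (Op × α)) (f : Finset α → ZMod 2) :
    apps (l ++ l') f = apps l' (apps l f) := by
  induction l generalizing f with
  | nil => rfl
  | cons p l ih => simp [apps, ih]

lemma app_comm {x y : α} (h : x ≠ y) (c c' : Op) (f : Finset α → ZMod 2) :
    app c x (app c' y f) = app c' y (app c x f) := by
  ext F
  by_cases hx : x ∈ F <;> by_cases hy : y ∈ F <;> cases c <;> cases c' <;>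
    simp [app, hx, hy, h, h.symm, Finset.insert_comm x y F] <;> ring

lemma app_third {a b b' : Op} {e : α} {f : Finset α → ZMod 2} (h : app a e f = 0)
    (hb : b ≠ a) (hb' : b' ≠ a) : app b e f = app b' e f := by
  ext F
  have h1 := congrFun h F
  revert h1
  by_cases he : e ∈ F
  · simp [app, he]
  · cases a <;> cases b <;> cases b' <;> simp [app, he] at * <;>
      generalize f F = u <;> generalize f (insert e F) = v <;> revert u v <;> decide

lemma app_add {a b c : Op} (hab : a ≠ b) (hac : a ≠ c) (hbc : b ≠ c) (e : α)
    (f : Finset α → ZMod 2) : app c e f = app a e f + app b e f := by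
  ext F
  by_cases he : e ∈ F
  · simp [app, he]
  · cases a <;> cases b <;> cases c <;> simp [app, he] at * <;>
      generalize f F = u <;> generalize f (insert e F) = v <;> revert u v <;> decide

lemma app_eq_zero {a a' : Op} (ha : a ≠ a') {e : α} {f : Finset α → ZMod 2}
    (h : app a e f = 0) (h' : app a' e f = 0) : f = 0 := by
  have key : ∀ F, e ∉ F → f F = 0 ∧ f (insert e F) = 0 := by
    intro F he
    have h1 := congrFun h F
    have h2 := congrFun h' F
    revert h1 h2
    cases a <;> cases a' <;> simp [app, he] at * <;>
      generalize f F = u <;> generalize f (insert e F) = v <;> revert u v <;> decide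
  ext F
  by_cases he : e ∈ F
  · have := (key (F.erase e) (by simp)).2
    rwa [Finset.insert_erase he] at this
  · exact (key F he).1

lemma Supp.app {Y : Finset α} {y : α} {f : Finset α → ZMod 2} (hf : Supp (insert y Y) f)
    (c : Op) : Supp Y (app c y f) := by
  intro F hF
  by_cases hy : y ∈ F
  · simp [SplitterVf.app, hy]
  · have h1 : f F = 0 := hf F fun h => hF fun z hz => by
      rcases Finset.mem_insert.1 (h hz) with rfl | h'
      · exact absurd hz hy
      · exact h'
    have h2 : f (insert y F) = 0 := hf _ fun h => hF fun z hz => by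
      rcases Finset.mem_insert.1 (h (Finset.mem_insert_of_mem hz)) with rfl | h'
      · exact absurd hz hy
      · exact h'
    cases c <;> simp [SplitterVf.app, hy, h1, h2]

lemma Supp.apps {l : List (Op × α)} {Y Z : Finset α} (hl : Cov l Y) {f : Finset α → ZMod 2}
    (hf : Supp (Z ∪ Y) f) : Supp Z (apps l f) := by
  induction hl generalizing f with
  | nil => simpa [SplitterVf.apps] using hf
  | cons c y hy hl ih =>
    refine ih (Supp.app ?_ c)
    simpa using hf

omit [DecidableEq α] in
lemma Supp.mono {X Y : Finset α} (h : X ⊆ Y) {f : Finset α → ZMod 2} (hf : Supp X f) :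
    Supp Y f := fun F hF => hf F fun h' => hF (h'.trans h)

@[simp] lemma ten_zero_left (X : Finset α) (h : Finset α → ZMod 2) : ten X 0 h = 0 := by
  ext F; simp [ten]

@[simp] lemma ten_zero_right (X : Finset α) (g : Finset α → ZMod 2) : ten X g 0 = 0 := by
  ext F; simp [ten]

lemma app_ten_right {X : Finset α} {y : α} (hy : y ∉ X) (c : Op) (g h : Finset α → ZMod 2) :
    app c y (ten X g h) = ten X g (app c y h) := by
  ext F
  by_cases hF : y ∈ F
  · simp [app, ten, hF, hy]
  · cases c <;> simp [app, ten, hF, Finset.insert_inter_of_notMem hy,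
      Finset.insert_sdiff_of_notMem _ hy, mul_add]

lemma app_ten_left {X : Finset α} {y : α} (hy : y ∈ X) (c : Op) (g h : Finset α → ZMod 2) :
    app c y (ten X g h) = ten X (app c y g) h := by
  ext F
  by_cases hF : y ∈ F
  · simp [app, ten, hF, hy]
  · cases c <;> simp [app, ten, hF, Finset.insert_inter_of_mem hy,
      Finset.insert_sdiff_of_mem _ hy, add_mul]

lemma apps_ten_right {X Y : Finset α} {l : List (Op × α)} (hl : Cov l Y) (hXY : Disjoint X Y)
    (g h : Finset α → ZMod 2) : apps l (ten X g h) = ten X g (apps l h) := by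
  induction hl generalizing h with
  | nil => rfl
  | cons c y hy hl ih =>
    rw [Finset.disjoint_insert_right] at hXY
    rw [apps, app_ten_right hXY.1, ih hXY.2]; rfl

lemma ten_comm {X Y : Finset α} (hXY : Disjoint X Y) {g h : Finset α → ZMod 2}
    (hg : Supp X g) (hh : Supp Y h) : ten X g h = ten Y h g := by
  ext F
  by_cases hF : F ⊆ X ∪ Y
  · have h1 : F ∩ X = F \ Y := by
      ext z
      have h3 : z ∈ X → z ∉ Y := fun h => Finset.disjoint_left.1 hXY h
      have := @hF z
      simp at *; tauto
    have h2 : F ∩ Y = F \ X := by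
      ext z
      have h3 : z ∈ X → z ∉ Y := fun h => Finset.disjoint_left.1 hXY h
      have := @hF z
      simp at *; tauto
    simp [ten, h1, h2, mul_comm]
  · have h1 : ¬ F \ X ⊆ Y := fun h' => hF fun z hz => by
      have := @h' z; simp at *; tauto
    have h2 : ¬ F \ Y ⊆ X := fun h' => hF fun z hz => by
      have := @h' z; simp at *; tauto
    simp [ten, hg _ h2, hh _ h1]

lemma Supp.ten {X Y : Finset α} {g h : Finset α → ZMod 2} (hh : Supp Y h) :
    Supp (X ∪ Y) (ten X g h) := by
  intro F hF
  have h1 : ¬ F \ X ⊆ Y := fun h' => hF fun z hz => by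
    have := @h' z; simp at *; tauto
  simp [SplitterVf.ten, hh _ h1]

/-- A tensor on the empty index set is a scalar. -/
lemma Supp.empty {h : Finset α → ZMod 2} (hh : Supp ∅ h) :
    h = 0 ∨ h = fun F => if F = ∅ then 1 else 0 := by
  rcases zmod2_cases (h ∅) with h0 | h0
  · left; ext F
    by_cases hF : F = ∅
    · simp [hF, h0]
    · exact hh F (by simpa using hF)
  · right; ext F
    by_cases hF : F = ∅
    · simp [hF, h0]
    · simpa [hF] using hh F (by simpa using hF)

lemma ten_unit {X : Finset α} {g : Finset α → ZMod 2} (hg : Supp X g) :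
    ten X g (fun F => if F = ∅ then 1 else 0) = g := by
  ext F
  by_cases hF : F ⊆ X
  · simp [ten, Finset.inter_eq_left.2 hF, Finset.sdiff_eq_empty_iff_subset.2 hF]
  · simp [ten, Finset.sdiff_eq_empty_iff_subset, hF, hg F hF]

lemma Cov.append {l l' : List (Op × α)} {Y Y' : Finset α} (h : Cov l Y) (h' : Cov l' Y')
    (hd : Disjoint Y Y') : Cov (l ++ l') (Y ∪ Y') := by
  induction h with
  | nil => simpa using h'
  | cons c y hy hl ih =>
    rw [Finset.disjoint_insert_left] at hd
    rw [Finset.insert_union]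
    exact Cov.cons c y (by simp [hy, hd.1]) (ih hd.2)

/-- The functional at any prescribed element of the index set may be applied first. -/
lemma Cov.pull {l : List (Op × α)} {Y : Finset α} (h : Cov l Y) {e : α} (he : e ∈ Y) :
    ∃ c l', Cov l' (Y.erase e) ∧ ∀ f : Finset α → ZMod 2, apps l f = apps l' (app c e f) := by
  induction h with
  | nil => simp at he
  | @cons l Y c y hy hl ih =>
    by_cases hey : e = y
    · subst hey
      exact ⟨c, l, by rwa [Finset.erase_insert hy], fun f => rfl⟩
    · obtain ⟨c', l', hl', hf⟩ := ih ((Finset.mem_insert.1 he).resolve_left hey)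
      refine ⟨c', (c, y) :: l', ?_, fun f => ?_⟩
      · rw [Finset.erase_insert_of_ne (Ne.symm hey)]
        exact Cov.cons c y (by simp [hy]) hl'
      · simp only [apps]
        rw [hf, app_comm hey]

/-- A product functional applied to a tensor product acts on each factor separately. -/
lemma Cov.split {l : List (Op × α)} {Z : Finset α} (h : Cov l Z) (X : Finset α) :
    ∃ l₁ l₂, Cov l₁ (Z ∩ X) ∧ Cov l₂ (Z \ X) ∧ ∀ g h : Finset α → ZMod 2,
      apps l (ten X g h) = ten X (apps l₁ g) (apps l₂ h) := by
  induction h with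
  | nil => exact ⟨[], [], by simpa using Cov.nil, by simpa using Cov.nil, fun _ _ => rfl⟩
  | @cons l Y c y hy hl ih =>
    obtain ⟨l₁, l₂, h₁, h₂, hf⟩ := ih
    by_cases hyX : y ∈ X
    · refine ⟨(c, y) :: l₁, l₂, ?_, ?_, fun g h => ?_⟩
      · rw [Finset.insert_inter_of_mem hyX]; exact Cov.cons c y (by simp [hy]) h₁
      · rwa [Finset.insert_sdiff_of_mem _ hyX]
      · simp only [apps]; rw [app_ten_left hyX, hf]
    · refine ⟨l₁, (c, y) :: l₂, ?_, ?_, fun g h => ?_⟩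
      · rwa [Finset.insert_inter_of_notMem hyX]
      · rw [Finset.insert_sdiff_of_notMem _ hyX]; exact Cov.cons c y (by simp [hy]) h₂
      · simp only [apps]; rw [app_ten_right hyX, hf]

/-! ### Set systems as tensors -/

/-- The indicator tensor of a set system. -/
def chi (D : SetSystem α) : Finset α → ZMod 2 := fun F => if F ∈ D.Fs then 1 else 0

/-- The elementary 3-minor of type `c` at `e`. -/
def op (c : Op) (D : SetSystem α) (e : α) : SetSystem α :=
  match c with
  | .del => D.delete e
  | .con => D.contract e
  | .tcon => (D.lcomp e).contract e

lemma op_E (c : Op) (D : SetSystem α) (e : α) : (op c D e).E = D.E.erase e := by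
  cases c <;> simp only [op, delete, contract] <;> split_ifs <;> rfl

omit [DecidableEq α] in
lemma chi_ne_zero {D : SetSystem α} {F : Finset α} : chi D F ≠ 0 ↔ F ∈ D.Fs := by
  simp [chi]

omit [DecidableEq α] in
lemma chi_eq_zero {D : SetSystem α} {F : Finset α} : chi D F = 0 ↔ F ∉ D.Fs := by
  simp [chi]

omit [DecidableEq α] in
lemma chi_inj {D D' : SetSystem α} (hE : D.E = D'.E) (h : chi D = chi D') : D = D' := by
  have hF : D.Fs = D'.Fs := by
    ext F
    rw [← chi_ne_zero, h, chi_ne_zero]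
  cases D; cases D'
  exact congrArg₂ SetSystem.mk hE hF

lemma chi_del₀ (D : SetSystem α) (e : α) : chi (D.del₀ e) = app .del e (chi D) := by
  ext F
  by_cases he : e ∈ F <;> simp [chi, app, del₀, he]

lemma chi_con₀ (D : SetSystem α) (e : α) : chi (D.con₀ e) = app .con e (chi D) := by
  ext F
  by_cases he : e ∈ F
  · have : ¬ ∃ G ∈ D.Fs, e ∈ G ∧ F = G.erase e := by
      rintro ⟨G, -, -, rfl⟩; simp at he
    simp [chi, app, con₀, he, this]
  · have : (∃ G ∈ D.Fs, e ∈ G ∧ F = G.erase e) ↔ insert e F ∈ D.Fs := by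
      constructor
      · rintro ⟨G, hG, heG, rfl⟩; rwa [Finset.insert_erase heG]
      · intro h; exact ⟨_, h, by simp, by simp [he]⟩
    simp [chi, app, con₀, he, this]

lemma chi_lcomp (D : SetSystem α) (e : α) (F : Finset α) :
    chi (D.lcomp e) F = if e ∈ F then chi D F + chi D (F.erase e) else chi D F := by
  by_cases he : e ∈ F
  · have : (∃ G ∈ D.Fs, e ∉ G ∧ F = G ∪ {e}) ↔ F.erase e ∈ D.Fs := by
      constructor
      · rintro ⟨G, hG, heG, rfl⟩
        have : (G ∪ {e}).erase e = G := by
          ext z; by_cases hz : z = e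
          · subst hz; simp [heG]
          · simp [hz]
        rwa [this]
      · intro h
        refine ⟨_, h, by simp, ?_⟩
        rw [Finset.union_comm, ← Finset.insert_eq, Finset.insert_erase he]
    simp only [chi, lcomp, Set.mem_symmDiff, Set.mem_ofPred_eq, this]
    by_cases h1 : F ∈ D.Fs <;> by_cases h2 : F.erase e ∈ D.Fs <;>
      simp [he, h1, h2, zmod2_self]
  · have : ¬ (∃ G ∈ D.Fs, e ∉ G ∧ F = G ∪ {e}) := by
      rintro ⟨G, -, -, rfl⟩; simp at he
    simp only [chi, lcomp, Set.mem_symmDiff, Set.mem_ofPred_eq, this]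
    simp [he]

lemma chi_twist (D : SetSystem α) (e : α) (F : Finset α) :
    chi (D.twist {e}) F = chi D (F ∆ {e}) := by
  have : (∃ G ∈ D.Fs, F = G ∆ {e}) ↔ F ∆ {e} ∈ D.Fs := by
    constructor
    · rintro ⟨G, hG, rfl⟩; simpa using hG
    · intro h; exact ⟨_, h, by simp⟩
  simp [chi, twist, this]

lemma symmDiff_single_of_notMem {e : α} {F : Finset α} (h : e ∉ F) :
    F ∆ {e} = insert e F := by
  ext z; by_cases hz : z = e
  · subst hz; simp [Finset.mem_symmDiff, h]
  · simp [Finset.mem_symmDiff, hz]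

lemma symmDiff_single_of_mem {e : α} {F : Finset α} (h : e ∈ F) :
    F ∆ {e} = F.erase e := by
  ext z; by_cases hz : z = e
  · subst hz; simp [Finset.mem_symmDiff, h]
  · simp [Finset.mem_symmDiff, hz]

lemma app_del_lcomp (D : SetSystem α) (e : α) :
    app .del e (chi (D.lcomp e)) = app .del e (chi D) := by
  ext F
  by_cases he : e ∈ F <;> simp [app, chi_lcomp, he]

lemma app_con_lcomp (D : SetSystem α) (e : α) :
    app .con e (chi (D.lcomp e)) = app .tcon e (chi D) := by
  ext F
  by_cases he : e ∈ F <;> simp [app, chi_lcomp, he, add_comm]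

lemma app_del_twist (D : SetSystem α) (e : α) :
    app .del e (chi (D.twist {e})) = app .con e (chi D) := by
  ext F
  by_cases he : e ∈ F <;> simp [app, chi_twist, he, symmDiff_single_of_notMem]

lemma app_con_twist (D : SetSystem α) (e : α) :
    app .con e (chi (D.twist {e})) = app .del e (chi D) := by
  ext F
  by_cases he : e ∈ F
  · simp [app, he]
  · simp [app, chi_twist, he, symmDiff_single_of_mem]

lemma isColoop_iff (D : SetSystem α) (e : α) : D.IsColoop e ↔ app .del e (chi D) = 0 := by
  constructor
  · intro h; ext F
    by_cases he : e ∈ F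
    · simp [app, he]
    · simpa [app, he, chi_eq_zero] using fun hF => he (h F hF)
  · intro h F hF
    by_contra he
    have := congrFun h F
    simp [app, he, chi_eq_zero, hF] at this

lemma isLoop_iff (D : SetSystem α) (e : α) : D.IsLoop e ↔ app .con e (chi D) = 0 := by
  constructor
  · intro h; ext F
    by_cases he : e ∈ F
    · simp [app, he]
    · simpa [app, he, chi_eq_zero] using fun hF => h _ hF (by simp)
  · intro h F hF he
    have := congrFun h (F.erase e)
    simp [app, Finset.insert_erase he, chi_eq_zero, hF] at this

lemma chi_op {c : Op} {D : SetSystem α} {e : α} (h : app c e (chi D) ≠ 0) :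
    chi (op c D e) = app c e (chi D) := by
  cases c
  · simp [op, delete, isColoop_iff, h, chi_del₀]
  · simp [op, contract, isLoop_iff, h, chi_con₀]
  · simp [op, contract, isLoop_iff, app_con_lcomp, h, chi_con₀]

/-- At a loop, coloop or other degenerate element, the convention for `delete` and `contract`
amounts to replacing the vanishing functional by one of the other two. -/
lemma chi_op' {c : Op} {D : SetSystem α} {e : α} (h : app c e (chi D) = 0) :
    ∃ c', c ≠ c' ∧ chi (op c D e) = app c' e (chi D) := by
  cases c
  · exact ⟨.con, by simp, by simp [op, delete, isColoop_iff, h, chi_con₀]⟩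
  · exact ⟨.del, by simp, by simp [op, contract, isLoop_iff, h, chi_del₀]⟩
  · exact ⟨.del, by simp, by
      simp [op, contract, isLoop_iff, app_con_lcomp, h, chi_del₀, app_del_lcomp]⟩

/-! ### Connectivity and 3-minors of tensors -/

lemma restrict_ten {E X : Finset α} {f g h : Finset α → ZMod 2} (hf : Supp E f)
    (h' : f = ten X g h) : f = ten (X ∩ E) (fun F => if F ⊆ X ∩ E then g F else 0)
      (fun F => if F ⊆ E \ X then h F else 0) := by
  ext F
  by_cases hF : F ⊆ E
  · have h1 : F ∩ (X ∩ E) = F ∩ X := by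
      ext z; have := @hF z; simp at *; tauto
    have h2 : F \ (X ∩ E) = F \ X := by
      ext z; have := @hF z; simp at *; tauto
    have h3 : F ∩ X ⊆ X ∩ E := fun z hz => by have := @hF z; simp at *; tauto
    have h4 : F \ X ⊆ E \ X := fun z hz => by have := @hF z; simp at *; tauto
    simp only [ten, h1, h2, h3, h4, if_true]
    rw [h']; rfl
  · have h4 : ¬ F \ (X ∩ E) ⊆ E \ X := fun h => hF fun z hz => by
      have := @h z; simp at *; tauto
    simp only [ten, h4, if_false, mul_zero]
    exact hf F hF

/-- The factors of a disconnected tensor may be taken supported on the two sides. -/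
lemma Disc.exists_supp {E : Finset α} {f : Finset α → ZMod 2} (hf : Supp E f) (h : Disc E f) :
    ∃ X Y g h, X ∪ Y = E ∧ Disjoint X Y ∧ X.Nonempty ∧ Y.Nonempty ∧ Supp X g ∧ Supp Y h ∧
      f = ten X g h := by
  obtain ⟨X, g, h, ⟨x, hx, hx'⟩, ⟨y, hy, hy'⟩, hf'⟩ := h
  refine ⟨X ∩ E, E \ X, _, _, ?_, ?_, ⟨x, by simp [*]⟩, ⟨y, by simp [*]⟩, ?_, ?_,
    restrict_ten hf hf'⟩
  · ext z; simp; tauto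
  · rw [Finset.disjoint_left]; intro z; simp; tauto
  · intro F hF; simp [hF]
  · intro F hF; simp [hF]

omit [DecidableEq α] in
lemma supp_chi {D : SetSystem α} (h : ∀ F ∈ D.Fs, F ⊆ D.E) : Supp D.E (chi D) := by
  intro F hF
  exact chi_eq_zero.2 fun h' => hF (h F h')

lemma connected_iff {D : SetSystem α} (hD : Supp D.E (chi D)) :
    D.Connected ↔ ¬ Disc D.E (chi D) := by
  refine not_congr ⟨?_, ?_⟩
  · rintro ⟨X, ⟨hXE, D₁, D₂, h1, h2, h3, h4, h5⟩, ⟨x, hx⟩, hne⟩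
    obtain ⟨y, hy, hy'⟩ : ∃ y ∈ D.E, y ∉ X := by
      by_contra hcon
      push Not at hcon
      exact hne (hXE.antisymm hcon)
    refine ⟨X, chi D₁, chi D₂, ⟨x, hXE hx, hx⟩, ⟨y, hy, hy'⟩, ?_⟩
    ext F
    have key : F ∈ D.Fs ↔ F ∩ X ∈ D₁.Fs ∧ F \ X ∈ D₂.Fs := by
      rw [h5]
      constructor
      · rintro ⟨F₁, hF₁, F₂, hF₂, rfl⟩
        have a1 := h3 F₁ hF₁
        have a2 := h4 F₂ hF₂
        rw [h1] at a1
        rw [h2] at a2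
        have b1 : (F₁ ∪ F₂) ∩ X = F₁ := by
          ext z; have := @a1 z; have := @a2 z; simp at *; tauto
        have b2 : (F₁ ∪ F₂) \ X = F₂ := by
          ext z; have := @a1 z; have := @a2 z; simp at *; tauto
        rw [b1, b2]; exact ⟨hF₁, hF₂⟩
      · rintro ⟨a, b⟩
        exact ⟨_, a, _, b, by ext z; simp; tauto⟩
    by_cases c1 : F ∩ X ∈ D₁.Fs <;> by_cases c2 : F \ X ∈ D₂.Fs <;>
      simp [chi, ten, key, c1, c2]
  · intro h
    obtain ⟨X, Y, g, h, hE, hd, ⟨x, hx⟩, ⟨y, hy⟩, hg, hh, hf⟩ := h.exists_supp hD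
    have hYE : Y = D.E \ X := by
      rw [← hE]; ext z
      have h3 : z ∈ X → z ∉ Y := fun h => Finset.disjoint_left.1 hd h
      simp; tauto
    refine ⟨X, ⟨by rw [← hE]; exact Finset.subset_union_left,
      ⟨X, {F | g F ≠ 0}⟩, ⟨Y, {F | h F ≠ 0}⟩, rfl, hYE, ?_, ?_, ?_⟩, ⟨x, hx⟩, ?_⟩
    · intro F hF; by_contra hc; exact hF (hg F hc)
    · intro F hF; by_contra hc; exact hF (hh F hc)
    · refine chi_inj hE.symm ?_
      ext F
      have key : F ∈ (SetSystem.directSum ⟨X, {F | g F ≠ 0}⟩ ⟨Y, {F | h F ≠ 0}⟩).Fs ↔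
          g (F ∩ X) ≠ 0 ∧ h (F \ X) ≠ 0 := by
        constructor
        · rintro ⟨F₁, hF₁, F₂, hF₂, rfl⟩
          have a1 : F₁ ⊆ X := by by_contra hc; exact hF₁ (hg _ hc)
          have a2 : F₂ ⊆ Y := by by_contra hc; exact hF₂ (hh _ hc)
          have b1 : (F₁ ∪ F₂) ∩ X = F₁ := by
            ext z; have := @a1 z; have := @a2 z
            have h3 : z ∈ X → z ∉ Y := fun h => Finset.disjoint_left.1 hd h
            simp at *; tauto
          have b2 : (F₁ ∪ F₂) \ X = F₂ := by
            ext z; have := @a1 z; have := @a2 z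
            have h3 : z ∈ X → z ∉ Y := fun h => Finset.disjoint_left.1 hd h
            simp at *; tauto
          rw [b1, b2]; exact ⟨hF₁, hF₂⟩
        · rintro ⟨a, b⟩
          exact ⟨_, a, _, b, by ext z; simp; tauto⟩
      rw [hf, chi]
      simp only [key, ten]
      rcases zmod2_cases (g (F ∩ X)) with h1 | h1 <;>
        rcases zmod2_cases (h (F \ X)) with h2 | h2 <;> simp [h1, h2]
    · rintro rfl
      exact Finset.disjoint_left.1 hd (hE ▸ Finset.mem_union_right _ hy) hy

lemma minor_op {D' D : SetSystem α} (c : Op) (e : α) (h : Minor3Of D' D) (he : e ∈ D'.E) :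
    Minor3Of (op c D' e) D := by
  cases c
  · exact h.del e he
  · exact h.con e he
  · exact h.tcon e he

lemma minor_trans {A B C : SetSystem α} (h : Minor3Of A B) (h' : Minor3Of B C) :
    Minor3Of A C := by
  induction h with
  | refl => exact h'
  | del e _ he ih => exact (ih h').del e he
  | con e _ he ih => exact (ih h').con e he
  | tcon e _ he ih => exact (ih h').tcon e he

/-- A nonvanishing product functional yields a 3-minor: none of the functionals applied on the
way vanishes, so the conventions for loops and coloops are never invoked. -/
lemma minor_of_cov {l : List (Op × α)} {Y : Finset α} (hl : Cov l Y) {D D' : SetSystem α}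
    (hYE : Y ⊆ D.E) (hE : D'.E = D.E \ Y) (hchi : apps l (chi D) = chi D')
    (hne : chi D' ≠ 0) : Minor3Of D' D := by
  induction hl generalizing D with
  | nil =>
    rw [chi_inj (D := D') (D' := D) (by simpa using hE) hchi.symm]
    exact .refl _
  | @cons l Y c y hy hl ih =>
    rw [apps] at hchi
    have h0 : app c y (chi D) ≠ 0 := by
      intro h0
      simp only [h0, apps_zero] at hchi
      exact hne hchi.symm
    rw [Finset.insert_subset_iff] at hYE
    refine minor_trans (ih (D := op c D y) ?_ ?_ ?_) (minor_op c y (.refl D) hYE.1)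
    · rw [op_E]; exact Finset.subset_erase.2 ⟨hYE.2, hy⟩
    · rw [op_E, hE]; ext z; simp; tauto
    · rw [chi_op h0]; exact hchi

/-- The inductive step of `cov_of_minor`. -/
lemma cov_of_op {D' D : SetSystem α} (c : Op) {e : α} (he : e ∈ D'.E)
    (h : D'.E ⊆ D.E ∧ chi D' ≠ 0 ∧ ∃ l, Cov l (D.E \ D'.E) ∧ apps l (chi D) = chi D') :
    (op c D' e).E ⊆ D.E ∧ chi (op c D' e) ≠ 0 ∧
      ∃ l, Cov l (D.E \ (op c D' e).E) ∧ apps l (chi D) = chi (op c D' e) := by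
  obtain ⟨hE, hne, l, hl, hchi⟩ := h
  obtain ⟨c', h1, h2⟩ : ∃ c', chi (op c D' e) = app c' e (chi D') ∧ app c' e (chi D') ≠ 0 := by
    by_cases h0 : app c e (chi D') = 0
    · obtain ⟨c', hc, h⟩ := chi_op' h0
      exact ⟨c', h, fun h' => hne (app_eq_zero hc h0 h')⟩
    · exact ⟨c, chi_op h0, h0⟩
  rw [op_E]
  refine ⟨(Finset.erase_subset _ _).trans hE, h1 ▸ h2, l ++ [(c', e)], ?_, ?_⟩
  · have : D.E \ D'.E.erase e = (D.E \ D'.E) ∪ insert e ∅ := by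
      ext z; by_cases hz : z = e
      · subst hz; simp [hE he]
      · simp [hz]
    rw [this]
    exact hl.append (.cons c' e (by simp) .nil) (by simp [he])
  · rw [apps_append, hchi, h1]; rfl

/-- Every 3-minor of a nonempty set system is obtained by a product functional. -/
lemma cov_of_minor {D' D : SetSystem α} (h : Minor3Of D' D) (hD : chi D ≠ 0) :
    D'.E ⊆ D.E ∧ chi D' ≠ 0 ∧ ∃ l, Cov l (D.E \ D'.E) ∧ apps l (chi D) = chi D' := by
  induction h with
  | refl => exact ⟨subset_rfl, hD, [], by simpa using Cov.nil, rfl⟩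
  | del e _ he ih => exact cov_of_op .del he (ih hD)
  | con e _ he ih => exact cov_of_op .con he (ih hD)
  | tcon e _ he ih => exact cov_of_op .tcon he (ih hD)

/-! ### Vf-safe tensors -/

/-- `f` is the indicator tensor of a vf-safe delta-matroid with ground set `E`. -/
def VS (E : Finset α) (f : Finset α → ZMod 2) : Prop :=
  ∃ D : SetSystem α, D.E = E ∧ chi D = f ∧ D.IsVfSafe

lemma IsVfSafe.twist {D : SetSystem α} (h : D.IsVfSafe) {e : α} (he : e ∈ D.E) :
    (D.twist {e}).IsVfSafe := by
  intro D' hD'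
  refine h D' ?_
  generalize hA : D.twist {e} = A at hD'
  induction hD' with
  | refl => subst hA; exact (TwistLcompReach.refl D).twist e he
  | twist y _ hy ih => exact (ih hA).twist y hy
  | lcomp y _ hy ih => exact (ih hA).lcomp y hy

lemma IsVfSafe.lcomp {D : SetSystem α} (h : D.IsVfSafe) {e : α} (he : e ∈ D.E) :
    (D.lcomp e).IsVfSafe := by
  intro D' hD'
  refine h D' ?_
  generalize hA : D.lcomp e = A at hD'
  induction hD' with
  | refl => subst hA; exact (TwistLcompReach.refl D).lcomp e he
  | twist y _ hy ih => exact (ih hA).twist y hy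
  | lcomp y _ hy ih => exact (ih hA).lcomp y hy

omit [DecidableEq α] in
lemma chi_ne_zero_of_nonempty {D : SetSystem α} : chi D ≠ 0 ↔ D.Fs.Nonempty := by
  rw [Function.ne_iff]
  exact exists_congr fun F => chi_ne_zero

lemma twist_ne_zero {D : SetSystem α} (h : chi D ≠ 0) (e : α) : chi (D.twist {e}) ≠ 0 := by
  intro h0
  refine h (app_eq_zero (a := .con) (a' := .del) (by simp) (e := e) ?_ ?_)
  · rw [← app_del_twist, h0, app_zero]
  · rw [← app_con_twist, h0, app_zero]

lemma lcomp_ne_zero {D : SetSystem α} (h : chi D ≠ 0) (e : α) : chi (D.lcomp e) ≠ 0 := by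
  intro h0
  refine h (app_eq_zero (a := .tcon) (a' := .del) (by simp) (e := e) ?_ ?_)
  · rw [← app_con_lcomp, h0, app_zero]
  · rw [← app_del_lcomp, h0, app_zero]

lemma del₀_twist {D : SetSystem α} {x y : α} (h : y ≠ x) :
    (D.del₀ x).twist {y} = (D.twist {y}).del₀ x := by
  refine chi_inj rfl ?_
  ext F
  have hx : x ∈ F ∆ {y} ↔ x ∈ F := by simp [Finset.mem_symmDiff, h.symm]
  simp only [chi_twist, chi_del₀, app, hx]

lemma del₀_lcomp {D : SetSystem α} {x y : α} (h : y ≠ x) :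
    (D.del₀ x).lcomp y = (D.lcomp y).del₀ x := by
  refine chi_inj rfl ?_
  ext F
  by_cases hx : x ∈ F <;> by_cases hy : y ∈ F <;>
    simp [chi_lcomp, chi_del₀, app, hx, hy, h.symm]

lemma reach_del₀ {D D' : SetSystem α} {x : α} (h : TwistLcompReach D' (D.del₀ x))
    (hne : chi (D.del₀ x) ≠ 0) :
    chi D' ≠ 0 ∧ ∃ D'', TwistLcompReach D'' D ∧ D' = D''.del₀ x := by
  generalize hA : D.del₀ x = A at h hne
  induction h with
  | refl => subst hA; exact ⟨hne, D, .refl D, rfl⟩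
  | twist y _ hy ih =>
    obtain ⟨h1, D'', h2, rfl⟩ := ih hA hne
    obtain ⟨hyx, hy⟩ := Finset.mem_erase.1 hy
    exact ⟨twist_ne_zero h1 y, _, h2.twist y hy, del₀_twist hyx⟩
  | lcomp y _ hy ih =>
    obtain ⟨h1, D'', h2, rfl⟩ := ih hA hne
    obtain ⟨hyx, hy⟩ := Finset.mem_erase.1 hy
    exact ⟨lcomp_ne_zero h1 y, _, h2.lcomp y hy, del₀_lcomp hyx⟩

lemma IsVfSafe.del₀ {D : SetSystem α} (h : D.IsVfSafe) {x : α} (hne : chi (D.del₀ x) ≠ 0) :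
    (D.del₀ x).IsVfSafe := by
  intro D' hD'
  obtain ⟨h1, D'', h2, rfl⟩ := reach_del₀ hD' hne
  obtain ⟨-, hsub, hex⟩ := h D'' h2
  refine ⟨chi_ne_zero_of_nonempty.1 h1, fun F hF => Finset.subset_erase.2 ⟨hsub F hF.1, hF.2⟩, ?_⟩
  rintro F₁ ⟨h1, h1x⟩ F₂ ⟨h2, h2x⟩ z hz
  obtain ⟨y, hy, hF⟩ := hex F₁ h1 F₂ h2 z hz
  refine ⟨y, hy, hF, ?_⟩
  have a1 : x ≠ z := by rintro rfl; simp [Finset.mem_symmDiff, h1x, h2x] at hz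
  have a2 : x ≠ y := by rintro rfl; simp [Finset.mem_symmDiff, h1x, h2x] at hy
  simp [Finset.mem_symmDiff, h1x, a1, a2]

/-- A change of basis at `x` turning the functional of type `c` into deletion. -/
def toDel (c : Op) (D : SetSystem α) (x : α) : SetSystem α :=
  match c with
  | .del => D
  | .con => D.twist {x}
  | .tcon => (D.lcomp x).twist {x}

lemma toDel_E (c : Op) (D : SetSystem α) (x : α) : (toDel c D x).E = D.E := by
  cases c <;> rfl

lemma IsVfSafe.toDel {D : SetSystem α} (h : D.IsVfSafe) {x : α} (hx : x ∈ D.E) (c : Op) :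
    (toDel c D x).IsVfSafe := by
  cases c
  · exact h
  · exact IsVfSafe.twist h hx
  · exact IsVfSafe.twist (IsVfSafe.lcomp h hx) hx

lemma app_del_toDel (c : Op) (D : SetSystem α) (x : α) :
    app .del x (chi (toDel c D x)) = app c x (chi D) := by
  cases c
  · rfl
  · exact app_del_twist D x
  · exact (app_del_twist _ x).trans (app_con_lcomp D x)

lemma app_con_toDel (c : Op) (D : SetSystem α) (x : α) :
    ∃ c', c' ≠ c ∧ app .con x (chi (toDel c D x)) = app c' x (chi D) := by
  cases c
  · exact ⟨.con, by simp, rfl⟩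
  · exact ⟨.del, by simp, app_con_twist D x⟩
  · exact ⟨.del, by simp, (app_con_twist _ x).trans (app_del_lcomp D x)⟩

lemma VS.supp {E : Finset α} {f : Finset α → ZMod 2} (h : VS E f) : Supp E f := by
  obtain ⟨D, rfl, rfl, hD⟩ := h
  exact supp_chi (hD D (.refl D)).2.1

lemma VS.app {E : Finset α} {f : Finset α → ZMod 2} (h : VS E f) {x : α} (hx : x ∈ E) {c : Op}
    (h0 : app c x f ≠ 0) : VS (E.erase x) (app c x f) := by
  obtain ⟨D, rfl, rfl, hD⟩ := h
  have h1 : chi ((toDel c D x).del₀ x) = SplitterVf.app c x (chi D) := by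
    rw [chi_del₀, app_del_toDel]
  exact ⟨_, by rw [← toDel_E c D x]; rfl, h1, IsVfSafe.del₀ (IsVfSafe.toDel hD hx c) (h1 ▸ h0)⟩

lemma exchange_aux {D : SetSystem α} (hD : D.IsDeltaMatroid) {e y : α} (hey : e ≠ y)
    (h0 : ∀ F ∈ D.Fs, e ∉ F → y ∈ F) {G K : Finset α} (hGe : e ∉ G) (hGy : y ∉ G)
    (hKy : y ∉ K) (hG : insert y G ∈ D.Fs) (hK : insert e K ∈ D.Fs) :
    insert e G ∈ D.Fs := by
  obtain ⟨z, -, hF⟩ := hD.2.2 _ hG _ hK y (by simp [Finset.mem_symmDiff, hey.symm, hKy])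
  have hy : y ∉ insert y G ∆ {y, z} := by simp [Finset.mem_symmDiff]
  by_cases hze : z = e
  · subst hze
    convert hF using 1
    ext w
    by_cases h1 : w = z
    · subst h1; simp [Finset.mem_symmDiff, hGe, hey]
    · by_cases h2 : w = y
      · subst h2; simp [Finset.mem_symmDiff, hGy, h1]
      · simp [Finset.mem_symmDiff, h1, h2]
  · have he : e ∉ insert y G ∆ {y, z} := by
      simp [Finset.mem_symmDiff, hey, hGe, Ne.symm hze]
    exact absurd (h0 _ hF he) hy

/-- The only consequence of the exchange axiom used below: in the `3 × 3` array of minors at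
two elements, if one entry vanishes, then the nonzero entries in its row and its column agree.
After a change of basis the vanishing entry is the double deletion. -/
lemma VS.array {E : Finset α} {f : Finset α → ZMod 2} (h : VS E f) {e y : α} (he : e ∈ E)
    (hy : y ∈ E) (hey : e ≠ y) {a a' b b' : Op} (ha : a' ≠ a) (hb : b' ≠ b)
    (h0 : SplitterVf.app a e (SplitterVf.app b y f) = 0)
    (h1 : SplitterVf.app a e (SplitterVf.app b' y f) ≠ 0)
    (h2 : SplitterVf.app a' e (SplitterVf.app b y f) ≠ 0) :
    SplitterVf.app a' e (SplitterVf.app b y f) = SplitterVf.app a e (SplitterVf.app b' y f) := by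
  obtain ⟨D, rfl, rfl, hD⟩ := h
  set D₁ := toDel b D y with hD₁
  set D₂ := toDel a D₁ e with hD₂
  have hdm : D₂.IsDeltaMatroid :=
    IsVfSafe.toDel (IsVfSafe.toDel hD hy b) (by rw [toDel_E]; exact he) a _ (.refl _)
  obtain ⟨b'', hb'', hbeq⟩ := app_con_toDel b D y
  obtain ⟨a'', ha'', haeq⟩ := app_con_toDel a D₁ e
  have e0 : SplitterVf.app .del e (SplitterVf.app .del y (chi D₂)) = 0 := by
    rw [app_comm hey, hD₂, app_del_toDel, ← app_comm hey, hD₁, app_del_toDel, h0]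
  have e1 : SplitterVf.app .del e (SplitterVf.app .con y (chi D₂)) =
      SplitterVf.app a e (SplitterVf.app b' y (chi D)) := by
    rw [app_comm hey, hD₂, app_del_toDel, ← app_comm hey, hD₁, hbeq, app_comm hey,
      app_comm hey a b']
    rw [app_comm hey] at h0
    exact app_third h0 hb'' hb
  have e2 : SplitterVf.app .con e (SplitterVf.app .del y (chi D₂)) =
      SplitterVf.app a' e (SplitterVf.app b y (chi D)) := by
    rw [app_comm hey, hD₂, haeq, ← app_comm hey, hD₁, app_del_toDel]
    exact app_third h0 ha'' ha
  rw [← e1] at h1 ⊢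
  rw [← e2] at h2 ⊢
  have k0 : ∀ F ∈ D₂.Fs, e ∉ F → y ∈ F := by
    intro F hF heF
    by_contra hyF
    have := congrFun e0 F
    simp [SplitterVf.app, heF, hyF, chi_eq_zero, hF] at this
  have k1 : ∀ F, SplitterVf.app .del e (SplitterVf.app .con y (chi D₂)) F ≠ 0 ↔
      e ∉ F ∧ y ∉ F ∧ insert y F ∈ D₂.Fs := by
    intro F
    by_cases heF : e ∈ F <;> by_cases hyF : y ∈ F <;>
      simp [SplitterVf.app, heF, hyF, chi_eq_zero]
  have k2 : ∀ F, SplitterVf.app .con e (SplitterVf.app .del y (chi D₂)) F ≠ 0 ↔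
      e ∉ F ∧ y ∉ F ∧ insert e F ∈ D₂.Fs := by
    intro F
    by_cases heF : e ∈ F <;> by_cases hyF : y ∈ F <;>
      simp [SplitterVf.app, heF, hyF, chi_eq_zero, hey.symm]
  obtain ⟨G, hG⟩ := Function.ne_iff.1 h1
  obtain ⟨K, hK⟩ := Function.ne_iff.1 h2
  obtain ⟨hGe, hGy, hG⟩ := (k1 G).1 hG
  obtain ⟨hKe, hKy, hK⟩ := (k2 K).1 hK
  have key : ∀ F, SplitterVf.app .con e (SplitterVf.app .del y (chi D₂)) F ≠ 0 ↔
      SplitterVf.app .del e (SplitterVf.app .con y (chi D₂)) F ≠ 0 := by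
    intro F
    rw [k1, k2]
    refine and_congr_right fun h1 => and_congr_right fun h2 => ⟨fun h3 => ?_, fun h3 => ?_⟩
    · exact exchange_aux hdm hey.symm (fun F hF hyF => by
        by_contra heF; exact hyF (k0 F hF heF)) h2 h1 hGe h3 hG
    · exact exchange_aux hdm hey k0 h1 h2 hKy h3 hK
  ext F
  have := key F
  rcases zmod2_cases (SplitterVf.app .con e (SplitterVf.app .del y (chi D₂)) F) with h3 | h3 <;>
    rcases zmod2_cases (SplitterVf.app .del e (SplitterVf.app .con y (chi D₂)) F) with h4 | h4 <;>
    rw [h3, h4] at this ⊢ <;> simp at this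

/-! ### A disconnected elementary minor -/

lemma ten_ne_zero {X Y : Finset α} (hXY : Disjoint X Y) {g h : Finset α → ZMod 2}
    (hg : Supp X g) (hh : Supp Y h) (hg0 : g ≠ 0) (hh0 : h ≠ 0) : ten X g h ≠ 0 := by
  obtain ⟨A, hA⟩ := Function.ne_iff.1 hg0
  obtain ⟨B, hB⟩ := Function.ne_iff.1 hh0
  have hAX : A ⊆ X := by by_contra hc; exact hA (hg _ hc)
  have hBY : B ⊆ Y := by by_contra hc; exact hB (hh _ hc)
  refine Function.ne_iff.2 ⟨A ∪ B, ?_⟩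
  have b1 : (A ∪ B) ∩ X = A := by
    ext z; have := @hAX z; have := @hBY z
    have h3 : z ∈ X → z ∉ Y := fun h => Finset.disjoint_left.1 hXY h
    simp at *; tauto
  have b2 : (A ∪ B) \ X = B := by
    ext z; have := @hAX z; have := @hBY z
    have h3 : z ∈ X → z ∉ Y := fun h => Finset.disjoint_left.1 hXY h
    simp at *; tauto
  simp only [ten, b1, b2]
  exact mul_ne_zero hA hB

/-- If `f` has the minor `g ⊗ h` at `e`, then a product functional on the side of `h` that
kills `h` sends every other minor at `e` to `0` or to `g`: at the first step where the image of
`h` vanishes, `VS.array` identifies the image of that minor with `g ⊗ h'`. -/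
lemma apps_eq_zero_or {E X Y : Finset α} {f g h : Finset α → ZMod 2} {e : α} {a a' : Op}
    {l : List (Op × α)} (hl : Cov l Y) (hf : VS E f) (he : e ∈ E) (haa : a' ≠ a)
    (hYE : Y ⊆ E) (heY : e ∉ Y) (hXY : Disjoint X Y) (hg : Supp X g) (hg0 : g ≠ 0)
    (hh : Supp Y h) (hh0 : h ≠ 0) (hfac : app a e f = ten X g h) (hlh : apps l h = 0) :
    apps l (app a' e f) = 0 ∨ apps l (app a' e f) = g := by
  induction hl generalizing E f h with
  | nil => exact absurd hlh hh0
  | @cons l Y b y hy hl ih =>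
    rw [Finset.disjoint_insert_right] at hXY
    have hey : e ≠ y := by rintro rfl; simp at heY
    have hyE : y ∈ E := hYE (by simp)
    have heY' : e ∉ Y := fun h' => heY (by simp [h'])
    have hstep : ∀ c, app a e (app c y f) = ten X g (app c y h) := fun c => by
      rw [app_comm hey, hfac, app_ten_right hXY.1]
    simp only [apps] at hlh ⊢
    rw [← app_comm hey]
    by_cases h0 : app b y h = 0
    · obtain ⟨b', hb'⟩ : ∃ b', b' ≠ b := by
        cases b
        · exact ⟨.con, by simp⟩
        · exact ⟨.del, by simp⟩
        · exact ⟨.del, by simp⟩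
      have h1 : app b' y h ≠ 0 := fun h1 => hh0 (app_eq_zero hb' h1 h0)
      by_cases h2 : app a' e (app b y f) = 0
      · left; rw [h2, apps_zero]
      · have := hf.array he hyE hey haa hb' (by rw [hstep, h0, ten_zero_right])
          (by rw [hstep]; exact ten_ne_zero hXY.2 hg (hh.app b') hg0 h1) h2
        rw [this, hstep, apps_ten_right hl hXY.2]
        have h3 : Supp ∅ (apps l (app b' y h)) :=
          Supp.apps hl (by simpa using hh.app b')
        rcases h3.empty with h3 | h3
        · left; rw [h3, ten_zero_right]
        · right; rw [h3, ten_unit hg]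
    · have h1 : app b y f ≠ 0 := fun h1 => by
        have := hstep b
        rw [h1, app_zero] at this
        exact ten_ne_zero hXY.2 hg (hh.app b) hg0 h0 this.symm
      refine ih (hf.app hyE h1) (by simp [hey, he]) ?_ heY' hXY.2 (hh.app b) h0 (hstep b) hlh
      exact Finset.subset_erase.2 ⟨fun z hz => hYE (by simp [hz]), hy⟩

/-- The product functionals killing `h` span the annihilator of `h`: a tensor on `X ∪ Y` that is
killed by all of them is of the form `p ⊗ h`. -/
lemma eq_ten_of_forall {X Y : Finset α} (hXY : Disjoint X Y) {f h : Finset α → ZMod 2}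
    (hh : Supp Y h) (hf : Supp (X ∪ Y) f)
    (H : ∀ l, Cov l Y → apps l h = 0 → apps l f = 0) : ∃ p, f = ten X p h := by
  induction Y using Finset.induction_on generalizing f h with
  | empty =>
    rcases hh.empty with h0 | h0
    · exact ⟨0, by rw [ten_zero_left]; exact H [] .nil h0⟩
    · exact ⟨f, by rw [h0, ten_unit (by simpa using hf)]⟩
  | @insert y Y hy ih =>
    rw [Finset.disjoint_insert_right] at hXY
    rw [Finset.union_insert] at hf
    have : ∀ c, ∃ p, app c y f = ten X p (app c y h) := fun c =>
      ih hXY.2 (hh.app c) (hf.app c) fun l hl hlh => H ((c, y) :: l) (.cons c y hy hl) hlh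
    choose p hp using this
    suffices hq : ∃ q, ten X (p .del) (app .del y h) = ten X q (app .del y h) ∧
        ten X (p .con) (app .con y h) = ten X q (app .con y h) by
      obtain ⟨q, h1, h2⟩ := hq
      refine ⟨q, sub_eq_zero.1 (app_eq_zero (a := .del) (a' := .con) (by simp) (e := y) ?_ ?_)⟩
      · have h3 := (hp .del).trans h1
        rw [← app_ten_right hXY.1] at h3
        ext F; have := congrFun h3 F
        by_cases hF : y ∈ F <;> simp [app, hF] at this ⊢
        rw [this, sub_self]
      · have h3 := (hp .con).trans h2
        rw [← app_ten_right hXY.1] at h3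
        ext F; have := congrFun h3 F
        by_cases hF : y ∈ F <;> simp [app, hF] at this ⊢
        rw [this, sub_self]
    by_cases h0 : app .del y h = 0
    · exact ⟨p .con, by simp [h0], rfl⟩
    by_cases h1 : app .con y h = 0
    · exact ⟨p .del, rfl, by simp [h1]⟩
    by_cases h2 : app .tcon y h = 0
    · refine ⟨p .del, rfl, ?_⟩
      have h3 : app .tcon y f = 0 := by rw [hp, h2, ten_zero_right]
      rw [← hp, app_third h2 (b := .con) (b' := .del) (by simp) (by simp), ← hp]
      exact app_third h3 (by simp) (by simp)
    -- The components of `h` at `y` are linearly independent, so the coefficients agree.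
    have key : ∀ A, A ⊆ X → p .con A = p .del A := by
      intro A hA
      have hB : ∀ B, p .tcon A * (app .del y h B + app .con y h B) =
          p .del A * app .del y h B + p .con A * app .con y h B := by
        intro B
        by_cases hBY : B ⊆ Y
        · have b1 : (A ∪ B) ∩ X = A := by
            ext z; have := @hA z; have := @hBY z
            have h3 : z ∈ X → z ∉ Y := fun h => Finset.disjoint_left.1 hXY.2 h
            simp at *; tauto
          have b2 : (A ∪ B) \ X = B := by
            ext z; have := @hA z; have := @hBY z
            have h3 : z ∈ X → z ∉ Y := fun h => Finset.disjoint_left.1 hXY.2 h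
            simp at *; tauto
          have h3 := congrFun (app_add (a := .del) (b := .con) (c := .tcon) (by simp) (by simp)
            (by simp) y f) (A ∪ B)
          have h4 := congrFun (app_add (a := .del) (b := .con) (c := .tcon) (by simp) (by simp)
            (by simp) y h) B
          rw [hp, hp .del, hp .con] at h3
          simp only [ten, Pi.add_apply, b1, b2] at h3 h4
          rw [h4] at h3
          exact h3
        · rw [hh.app .del B hBY, hh.app .con B hBY]; simp
      rcases zmod2_cases (p .del A) with c0 | c0 <;> rcases zmod2_cases (p .con A) with c1 | c1 <;>
        rcases zmod2_cases (p .tcon A) with c2 | c2 <;> simp only [c0, c1, c2] at hB ⊢ <;>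
        exfalso
      · exact h1 (funext fun B => by simpa using (hB B).symm)
      · exact h0 (funext fun B => by simpa using hB B)
      · exact h0 (funext fun B => by simpa using (hB B).symm)
      · exact h1 (funext fun B => by simpa using hB B)
    refine ⟨p .del, rfl, ?_⟩
    ext F
    simp only [ten]
    rw [key _ Finset.inter_subset_right]

/-- If two minors at `e` are tensor products with a common factor `h`, then so is `f`. -/
lemma disc_of_common {E X : Finset α} {f g p h : Finset α → ZMod 2} {e : α} {a a' : Op}
    (haa : a ≠ a') (he : e ∈ E) (heX : e ∉ X) (hX : ∃ x ∈ E, x ≠ e ∧ x ∉ X)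
    (hh : ∀ F, e ∈ F → h F = 0) (h1 : app a e f = ten X g h) (h2 : app a' e f = ten X p h) :
    Disc E f := by
  have hall : ∀ c, ∃ q, app c e f = ten X q h := by
    intro c
    by_cases hca : c = a
    · exact ⟨g, hca ▸ h1⟩
    by_cases hca' : c = a'
    · exact ⟨p, hca' ▸ h2⟩
    refine ⟨g + p, ?_⟩
    rw [app_add haa (Ne.symm hca) (Ne.symm hca') e f, h1, h2]
    ext F; simp [ten, add_mul]
  obtain ⟨q₀, h0⟩ := hall .del
  obtain ⟨q₁, h1⟩ := hall .con
  obtain ⟨x, hx, hxe, hxX⟩ := hX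
  refine ⟨insert e X, fun F => if e ∈ F then q₁ (F.erase e) else q₀ F, h,
    ⟨e, he, by simp⟩, ⟨x, hx, by simp [hxe, hxX]⟩, ?_⟩
  ext F
  by_cases heF : e ∈ F
  · have h3 := congrFun h1 (F.erase e)
    have b1 : (F ∩ insert e X).erase e = F.erase e ∩ X := by
      ext z; by_cases hz : z = e
      · subst hz; simp
      · simp [hz]
    have b2 : F \ insert e X = F.erase e \ X := by
      ext z; by_cases hz : z = e
      · subst hz; simp
      · simp [hz]
    simp only [app, Finset.notMem_erase, if_false, Finset.insert_erase heF] at h3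
    simp only [h3, ten, b1, b2, Finset.mem_inter, heF, Finset.mem_insert_self, and_self, if_true]
  · have h3 := congrFun h0 F
    have b1 : F ∩ insert e X = F ∩ X := Finset.inter_insert_of_notMem heF
    have b2 : F \ insert e X = F \ X := Finset.sdiff_insert_of_notMem heF X
    simp only [app, heF, if_false] at h3
    simp only [h3, ten, b1, b2, Finset.mem_inter, heF, false_and, if_false]

/-- If `f` is connected and its minor at `e` of type `a` is `g ⊗ h`, then every minor of another
type has `g` as a further minor, through a functional killing `h`. -/
lemma exists_functional {E X Y : Finset α} {f g h : Finset α → ZMod 2} {e : α} {a a' : Op}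
    (hf : VS E f) (hcon : ¬ Disc E f) (he : e ∈ E) (haa : a ≠ a') (hE : X ∪ Y = E.erase e)
    (hXY : Disjoint X Y) (hY : Y.Nonempty) (hg : Supp X g) (hh : Supp Y h)
    (hfac : app a e f = ten X g h) (h0 : app a e f ≠ 0) :
    ∃ l, Cov l Y ∧ apps l h = 0 ∧ apps l (app a' e f) = g := by
  by_contra hno
  push Not at hno
  have heX : e ∉ X ∪ Y := by rw [hE]; simp
  have hYE : ∀ z ∈ Y, z ∈ E := fun z hz =>
    Finset.mem_of_mem_erase (hE ▸ Finset.mem_union_right X hz)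
  rw [Finset.mem_union, not_or] at heX
  obtain ⟨p, hp⟩ := eq_ten_of_forall hXY (f := app a' e f) hh
    (by rw [hE]; exact Supp.app (by rw [Finset.insert_erase he]; exact hf.supp) a')
    (fun l hl hlh => (apps_eq_zero_or hl hf he haa.symm hYE heX.2 hXY hg
      (by rintro rfl; exact h0 (by rw [hfac, ten_zero_left])) hh
      (by rintro rfl; exact h0 (by rw [hfac, ten_zero_right])) hfac hlh).resolve_right
        (hno l hl hlh))
  obtain ⟨y, hy⟩ := hY
  exact hcon (disc_of_common haa he heX.1 ⟨y, hYE y hy, by rintro rfl; exact heX.2 hy,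
    Finset.disjoint_right.1 hXY hy⟩ (fun F hF => hh F fun h' => heX.2 (h' hF)) hfac hp)

lemma ten_ten (X Z : Finset α) (p₁ q₁ p₂ q₂ : Finset α → ZMod 2) :
    ten X (ten Z p₁ q₁) (ten Z p₂ q₂) = ten Z (ten X p₁ p₂) (ten X q₁ q₂) := by
  ext F
  have b1 : (F ∩ X) ∩ Z = (F ∩ Z) ∩ X := by ext z; simp; tauto
  have b2 : (F ∩ X) \ Z = (F \ Z) ∩ X := by ext z; simp; tauto
  have b3 : (F \ X) ∩ Z = (F ∩ Z) \ X := by ext z; simp; tauto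
  have b4 : (F \ X) \ Z = (F \ Z) \ X := by ext z; simp; tauto
  simp only [ten, b1, b2, b3, b4]
  ring

/-- At most one of the three minors at an element of a connected tensor is disconnected. -/
lemma not_disc_of_disc {E X Y : Finset α} {f g h : Finset α → ZMod 2} {e : α} {a a' : Op}
    (hf : VS E f) (hcon : ¬ Disc E f) (he : e ∈ E) (haa : a ≠ a') (hE : X ∪ Y = E.erase e)
    (hXY : Disjoint X Y) (hX : X.Nonempty) (hY : Y.Nonempty) (hg : Supp X g) (hh : Supp Y h)
    (hfac : app a e f = ten X g h) (h0 : app a e f ≠ 0) :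
    ¬ Disc (E.erase e) (app a' e f) := by
  intro hdisc
  have hsupp : ∀ c, Supp (E.erase e) (app c e f) := fun c =>
    Supp.app (by rw [Finset.insert_erase he]; exact hf.supp) c
  obtain ⟨l, hl, -, hlg⟩ := exists_functional hf hcon he haa hE hXY hY hg hh hfac h0
  obtain ⟨l', hl', -, hlh⟩ := exists_functional hf hcon he haa (by rwa [Finset.union_comm])
    hXY.symm hX hh hg (hfac.trans (ten_comm hXY hg hh)) h0
  obtain ⟨Z, W, p, q, hZW, hdZW, hZ, hW, hp, hq, hpq⟩ := hdisc.exists_supp (hsupp a')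
  obtain ⟨l₁, l₂, -, -, hs⟩ := hl.split Z
  obtain ⟨l₃, l₄, -, -, hs'⟩ := hl'.split Z
  -- Both factors `g` and `h` are minors of `p ⊗ q`, so `g ⊗ h` splits along `Z` as well.
  rw [hpq, hs] at hlg
  rw [hpq, hs'] at hlh
  rw [← hlg, ← hlh, ten_ten] at hfac
  have hfac' := restrict_ten (hsupp a) hfac
  have hZE : Z ∩ E.erase e = Z := by rw [← hZW]; simp
  have hWE : E.erase e \ Z = W := by
    rw [← hZW, Finset.union_sdiff_cancel_left hdZW]
  rw [hZE, hWE] at hfac'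
  revert hfac'
  generalize hu : (fun F => if F ⊆ Z then _ else _ : Finset α → ZMod 2) = u
  generalize hv : (fun F => if F ⊆ W then _ else _ : Finset α → ZMod 2) = v
  intro hfac'
  have hu' : Supp Z u := fun F hF => by rw [← hu]; simp [hF]
  have hv' : Supp W v := fun F hF => by rw [← hv]; simp [hF]
  obtain ⟨l₅, hl₅, -, hl₅'⟩ := exists_functional hf hcon he haa hZW hdZW hW hu' hv' hfac' h0
  have hu0 : u ≠ 0 := by rintro rfl; exact h0 (by rw [hfac', ten_zero_left])
  rw [hpq, apps_ten_right hl₅ hdZW] at hl₅'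
  have hq0 : Supp ∅ (apps l₅ q) := Supp.apps hl₅ (by simpa using hq)
  have hpu : p = u := by
    rcases hq0.empty with h3 | h3
    · rw [h3, ten_zero_right] at hl₅'; exact absurd hl₅'.symm hu0
    · rwa [h3, ten_unit hp] at hl₅'
  subst hpu
  -- The factor on `Z` is common to both minors, which disconnects `f`.
  have heZW : e ∉ Z ∪ W := by rw [hZW]; simp
  rw [Finset.mem_union, not_or] at heZW
  obtain ⟨z, hz⟩ := hZ
  rw [ten_comm hdZW hp hv'] at hfac'
  rw [ten_comm hdZW hp hq] at hpq
  exact hcon (disc_of_common haa he heZW.2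
    ⟨z, Finset.mem_of_mem_erase (hZW ▸ Finset.mem_union_left W hz),
      by rintro rfl; exact heZW.1 hz, Finset.disjoint_left.1 hdZW hz⟩
    (fun F hF => hp F fun h' => heZW.1 (h' hF)) hfac' hpq)

/-! ### The splitter theorem -/

/-- A 3-minor of the product minor `g ⊗ h` at `e` whose ground set lies on the side of `h` is also
a 3-minor of every other minor at `e`: a product functional recovers `h` from that minor. -/
lemma minor_of_side {D D' : SetSystem α} {E X Y : Finset α} {f g h : Finset α → ZMod 2} {e : α}
    {a a' : Op} {l : List (Op × α)} (hf : VS E f) (hcon : ¬ Disc E f) (he : e ∈ E) (haa : a ≠ a')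
    (hE : X ∪ Y = E.erase e) (hXY : Disjoint X Y) (hX : X.Nonempty) (hg : Supp X g)
    (hh : Supp Y h) (hfac : app a e f = ten X g h) (h0 : app a e f ≠ 0)
    (hDE : D.E = E.erase e) (hD : chi D = app a' e f) (hD'E : D'.E ⊆ D.E)
    (hl : Cov l (D.E \ D'.E)) (hlf : apps l (app a e f) = chi D') (hD'0 : chi D' ≠ 0)
    (hdis : Disjoint D'.E X) : Minor3Of D' D := by
  obtain ⟨l', hl', -, hlh⟩ := exists_functional hf hcon he haa (by rwa [Finset.union_comm])
    hXY.symm hX hh hg (hfac.trans (ten_comm hXY hg hh)) h0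
  obtain ⟨l₁, l₂, hl₁, hl₂, hs⟩ := hl.split X
  rw [hfac, hs] at hlf
  have hXD : X ⊆ D.E := by rw [hDE, ← hE]; exact Finset.subset_union_left
  have hX1 : (D.E \ D'.E) ∩ X = X := by
    refine Finset.inter_eq_right.2 fun z hz => Finset.mem_sdiff.2
      ⟨hXD hz, Finset.disjoint_right.1 hdis hz⟩
  rw [hX1] at hl₁
  have hg' : Supp ∅ (apps l₁ g) := Supp.apps hl₁ (by simpa using hg)
  have hh' : Supp Y (apps l₂ h) := by
    refine Supp.apps hl₂ (hh.mono Finset.subset_union_left)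
  have hchi : apps l₂ h = chi D' := by
    rcases hg'.empty with h3 | h3
    · rw [h3, ten_zero_left] at hlf; exact absurd hlf.symm hD'0
    · rw [h3] at hlf
      rw [← hlf, ten_comm hXY (by rw [← h3]; exact hg'.mono (Finset.empty_subset X)) hh',
        ten_unit hh']
  refine minor_of_cov (hl'.append hl₂ ?_) ?_ ?_ ?_ hD'0
  · exact Finset.disjoint_sdiff
  · exact Finset.union_subset hXD (Finset.sdiff_subset.trans Finset.sdiff_subset)
  · ext z
    have h1 := @hD'E z
    have h2 : z ∈ D'.E → z ∉ X := fun h => Finset.disjoint_left.1 hdis h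
    simp; tauto
  · rw [apps_append, hD, hlh, hchi]

lemma supp_of_minor {D' D : SetSystem α} (hD : Supp D.E (chi D)) (hE : D'.E ⊆ D.E)
    {l : List (Op × α)} (hl : Cov l (D.E \ D'.E)) (h : apps l (chi D) = chi D') :
    Supp D'.E (chi D') := by
  rw [← h]
  exact Supp.apps hl (by rwa [Finset.union_sdiff_of_subset hE])

/-- The splitter theorem with the three elementary minors indexed by `Op`. -/
theorem splitter_op (D D' : SetSystem α) (hvf : D.IsVfSafe) (hConn : D.Connected)
    (hMinor : Minor3Of D' D) (hConn' : D'.Connected) (e : α) (heD : e ∈ D.E)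
    (heD' : e ∉ D'.E) : ∃ c, (op c D e).Connected ∧ Minor3Of D' (op c D e) := by
  have hVS : VS D.E (chi D) := ⟨D, rfl, rfl, hvf⟩
  have hne : chi D ≠ 0 := chi_ne_zero_of_nonempty.2 (hvf D (.refl D)).1
  obtain ⟨hE, hne', l, hl, hlD⟩ := cov_of_minor hMinor hne
  have hsupp' := supp_of_minor hVS.supp hE hl hlD
  rw [connected_iff hVS.supp] at hConn
  rw [connected_iff hsupp'] at hConn'
  obtain ⟨c, l, hl, hpull⟩ := hl.pull (e := e) (by simp [heD, heD'])
  rw [hpull] at hlD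
  have hsupp : ∀ c, Supp (D.E.erase e) (app c e (chi D)) := fun c =>
    Supp.app (by rw [Finset.insert_erase heD]; exact hVS.supp) c
  have h0 : app c e (chi D) ≠ 0 := fun h0 => by
    rw [h0, apps_zero] at hlD; exact hne' hlD.symm
  have hsub : D'.E ⊆ D.E.erase e := Finset.subset_erase.2 ⟨hE, heD'⟩
  have hcov : ∀ c', (op c' D e).E \ D'.E = (D.E \ D'.E).erase e := fun c' => by
    rw [op_E]; ext z; simp; tauto
  by_cases hc : Disc (D.E.erase e) (app c e (chi D))
  swap
  · refine ⟨c, ?_, ?_⟩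
    · rw [connected_iff (by rw [op_E, chi_op h0]; exact hsupp c), op_E, chi_op h0]
      exact hc
    · refine minor_of_cov hl ?_ ?_ (by rw [chi_op h0]; exact hlD) hne'
      · rw [← hcov c]; exact Finset.sdiff_subset
      · rw [← hcov c, Finset.sdiff_sdiff_eq_self (by rw [op_E]; exact hsub)]
  obtain ⟨c', hcc⟩ : ∃ c', c ≠ c' := by
    cases c
    · exact ⟨.con, by simp⟩
    · exact ⟨.del, by simp⟩
    · exact ⟨.del, by simp⟩
  obtain ⟨X, Y, g, h, hXYE, hXY, hX, hY, hg, hh, hfac⟩ := hc.exists_supp (hsupp c)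
  have h0' : app c' e (chi D) ≠ 0 := by
    obtain ⟨m, -, -, hm⟩ := exists_functional hVS hConn heD hcc hXYE hXY hY hg hh hfac h0
    intro h1
    rw [h1, apps_zero] at hm
    rw [← hm, ten_zero_left] at hfac
    exact h0 hfac
  have hl' : Cov l ((op c' D e).E \ D'.E) := by rwa [hcov c']
  refine ⟨c', ?_, ?_⟩
  · rw [connected_iff (by rw [op_E, chi_op h0']; exact hsupp c'), op_E, chi_op h0']
    exact not_disc_of_disc hVS hConn heD hcc hXYE hXY hX hY hg hh hfac h0
  · -- The connected minor lies on one side of the bipartition.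
    have hside : Disjoint D'.E X ∨ Disjoint D'.E Y := by
      by_contra hcon
      rw [not_or, Finset.not_disjoint_iff, Finset.not_disjoint_iff] at hcon
      obtain ⟨⟨x, hx, hxX⟩, ⟨y, hy, hyY⟩⟩ := hcon
      obtain ⟨l₁, l₂, -, -, hs⟩ := hl.split X
      exact hConn' ⟨X, _, _, ⟨x, hx, hxX⟩, ⟨y, hy, Finset.disjoint_right.1 hXY hyY⟩, by
        rw [← hlD, hfac, hs]⟩
    rcases hside with hside | hside
    · exact minor_of_side hVS hConn heD hcc hXYE hXY hX hg hh hfac h0 (op_E _ _ _)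
        (chi_op h0') (by rw [op_E]; exact hsub) hl' hlD hne' hside
    · exact minor_of_side hVS hConn heD hcc (by rwa [Finset.union_comm]) hXY.symm hY hh hg
        (hfac.trans (ten_comm hXY hg hh)) h0 (op_E _ _ _)
        (chi_op h0') (by rw [op_E]; exact hsub) hl' hlD hne' hside

end SplitterVf

open SetSystem in
/-- **Splitter theorem for vf-safe delta-matroids.** Let `D` be a connected vf-safe
delta-matroid with a connected 3-minor `D'`. If `e ∈ E(D) − E(D')`, then at least one of
`D∖e`, `D/e` and `D+e/e` is connected and has `D'` as a 3-minor. -/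
theorem splitter_vf_safe_delta_matroid {α : Type*} [DecidableEq α]
    (D D' : SetSystem α) (hD : D.IsDeltaMatroid) (hvf : D.IsVfSafe)
    (hConn : D.Connected) (hMinor : Minor3Of D' D) (hConn' : D'.Connected)
    (e : α) (heD : e ∈ D.E) (heD' : e ∉ D'.E) :
    ((D.delete e).Connected ∧ Minor3Of D' (D.delete e)) ∨
    ((D.contract e).Connected ∧ Minor3Of D' (D.contract e)) ∨
    (((D.lcomp e).contract e).Connected ∧ Minor3Of D' ((D.lcomp e).contract e)) := by
  obtain ⟨c, hc⟩ := SplitterVf.splitter_op D D' hvf hConn hMinor hConn' e heD heD'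
  cases c
  · exact .inl hc
  · exact .inr (.inl hc)
  · exact .inr (.inr hc)
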